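/- For every $n\ge0$ and every real $t$: $B_n-A_n=\sum_{r=0}^n(-it)^r\,\Delta_r^n$ and $B_n=\sum_{r=0}^n(-it)^r\sum_{0\le k\le n}\rho_k\,\theta^k\Delta_r^{n-k}$. -/

import Mathlib

open scoped Classical

/-- `ρ 0 = 1`, `ρ n = a 1 ⋯ a n`. -/
noncomputable def rho (a : ℕ → ℝ) (n : ℕ) : ℝ := ∏ k ∈ Finset.Icc 1 n, a k

/-- `R_k^l = ∑_{s=k}^l η s · ρ l / ρ s`. -/
noncomputable def Rkl (a η : ℕ → ℝ) (k l : ℕ) : ℝ :=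
  ∑ s ∈ Finset.Icc k l, η s * (rho a l / rho a s)

/-- `T_k^l = (R_k^l)² ρ (k-1) / ρ l`. -/
noncomputable def Tkl (a η : ℕ → ℝ) (k l : ℕ) : ℝ :=
  (Rkl a η k l) ^ 2 * (rho a (k - 1) / rho a l)

/-- `Δ_r^n = ∑_{1 ≤ k₁ < ⋯ < k_r ≤ n} R_1^{k₁} R_{k₁+1}^{k₂} ⋯ R_{k_{r-1}+1}^{k_r}`
(`Δ_0^n = 1`, and `Δ_r^n = 0` for `r > n`). -/
noncomputable def Delta (a η : ℕ → ℝ) (r n : ℕ) : ℝ :=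
  ∑ k ∈ (Fintype.piFinset fun _ : Fin r => Finset.Icc 1 n).filter
      (fun k => ∀ i j : Fin r, i < j → k i < k j),
    ∏ i : Fin r, Rkl a η (if (i : ℕ) = 0 then 1 else k ⟨(i : ℕ) - 1, Nat.lt_of_le_of_lt (Nat.sub_le _ _) i.isLt⟩ + 1) (k i)

/-- `K_r(n) = ∑_{p=-r}^r (-1)^p Δ_{r+p}^n Δ_{r-p}^n`. -/
noncomputable def Kr (a η : ℕ → ℝ) (r n : ℕ) : ℝ :=
  ∑ p ∈ Finset.Icc (-(r : ℤ)) (r : ℤ),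
    (-1 : ℝ) ^ p * Delta a η ((r : ℤ) + p).toNat n * Delta a η ((r : ℤ) - p).toNat n

/-- Shift of the data: `θ^j` replaces `(a k, η k)` by `(a (k+j), η (k+j))`. -/
def shift (f : ℕ → ℝ) (j : ℕ) : ℕ → ℝ := fun k => f (k + j)

/-!
The polynomials `Dₙ(X) = ∑ᵣ Δᵣⁿ Xʳ` satisfy `Dₙ₊₁ = (1 + aₙ₊₁ + ηₙ₊₁ X) Dₙ - aₙ₊₁ Dₙ₋₁`, the
recurrence of `Bₙ` and `Aₙ` at `X = -it`. To see this, sort the tuples of `Δᵣ₊₁ⁿ⁺¹` by whether their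
last entry is `n + 1`: those where it is contribute `∑ₖ P(k) R_{last k + 1}^{n+1}`, the sum running
over the `r`-tuples `k` bounded by `n`, and `R_j^{n+1} = aₙ₊₁ R_jⁿ + ηₙ₊₁` turns this into
`aₙ₊₁ (Δᵣ₊₁ⁿ - Δᵣ₊₁ⁿ⁻¹) + ηₙ₊₁ Δᵣⁿ`. The recurrence for the shifted data is the same one with a
shifted index, so `∑ₖ ρₖ θᵏDₙ₋ₖ` solves it too, and both identities follow by comparing two initial
values.
-/

open Finset Polynomial

section IncreasingTuples

/-- The tuples `1 ≤ k₁ < ⋯ < k_r ≤ n` over which `Δ_r^n` is summed. -/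
noncomputable def increasingTuples (r n : ℕ) : Finset (Fin r → ℕ) :=
  {k ∈ Fintype.piFinset fun _ : Fin r => Icc 1 n | StrictMono k}

variable {r n m : ℕ} {k : Fin r → ℕ}

theorem mem_increasingTuples :
    k ∈ increasingTuples r n ↔ (∀ i, k i ∈ Icc 1 n) ∧ StrictMono k := by
  simp only [increasingTuples, mem_filter, Fintype.mem_piFinset]

theorem strictMono_snoc_iff :
    StrictMono (Fin.snoc k m : Fin (r + 1) → ℕ) ↔ StrictMono k ∧ ∀ i, k i < m := by
  simp [StrictMono, Fin.forall_fin_succ', Fin.castSucc_lt_last, forall_and, Fin.le_last]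

theorem snoc_mem_increasingTuples :
    (Fin.snoc k m : Fin (r + 1) → ℕ) ∈ increasingTuples (r + 1) n ↔
      m ∈ Icc 1 n ∧ k ∈ increasingTuples r (m - 1) := by
  simp only [mem_increasingTuples, Fin.forall_fin_succ', Fin.snoc_castSucc, Fin.snoc_last,
    strictMono_snoc_iff, mem_Icc]
  constructor
  · rintro ⟨⟨hk, hm⟩, hmono, hlt⟩
    exact ⟨hm, fun i => ⟨(hk i).1, Nat.le_sub_one_of_lt (hlt i)⟩, hmono⟩
  · rintro ⟨hm, hk, hmono⟩
    refine ⟨⟨fun i => ⟨(hk i).1, ?_⟩, hm⟩, hmono, fun i => ?_⟩ <;> grind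

theorem increasingTuples_succ_succ (r n : ℕ) :
    increasingTuples (r + 1) (n + 1) = increasingTuples (r + 1) n ∪
      (increasingTuples r n).image fun k => (Fin.snoc k (n + 1) : Fin (r + 1) → ℕ) := by
  ext k
  induction k using Fin.snocCases with
  | snoc k m =>
    simp only [mem_union, mem_image, snoc_mem_increasingTuples, Fin.snoc_inj, mem_Icc]
    grind

theorem sum_increasingTuples_succ_succ {M : Type*} [AddCommMonoid M] (r n : ℕ)
    (f : (Fin (r + 1) → ℕ) → M) :
    ∑ k ∈ increasingTuples (r + 1) (n + 1), f k =
      ∑ k ∈ increasingTuples (r + 1) n, f k +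
        ∑ k ∈ increasingTuples r n, f (Fin.snoc k (n + 1)) := by
  have hdisj : Disjoint (increasingTuples (r + 1) n)
      ((increasingTuples r n).image fun k => (Fin.snoc k (n + 1) : Fin (r + 1) → ℕ)) := by
    simp [disjoint_right, snoc_mem_increasingTuples]
  rw [increasingTuples_succ_succ, sum_union hdisj,
    sum_image (Fin.snoc_left_injective (α := fun _ => ℕ) (n + 1)).injOn]

theorem increasingTuples_zero (n : ℕ) : increasingTuples 0 n = univ := by
  ext k
  simp only [mem_increasingTuples, IsEmpty.forall_iff, Subsingleton.strictMono k, and_self,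
    mem_univ]

theorem increasingTuples_eq_empty (h : n < r) : increasingTuples r n = ∅ := by
  refine eq_empty_of_forall_notMem fun k hk => h.not_ge ?_
  rw [mem_increasingTuples] at hk
  simpa using card_le_card_of_injOn k (fun i _ => hk.1 i) (s := univ) hk.2.injective.injOn

end IncreasingTuples

section LastEntry

/-- The last entry of the tuple `k₁, …, k_r`, with the convention `k₀ = 0` for the empty tuple. -/
def lastEntry {r : ℕ} (k : Fin r → ℕ) : ℕ := (Fin.cons 0 k : Fin (r + 1) → ℕ) (Fin.last r)

theorem lastEntry_snoc {r : ℕ} (k : Fin r → ℕ) (m : ℕ) :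
    lastEntry (Fin.snoc k m : Fin (r + 1) → ℕ) = m := by
  rw [lastEntry, Fin.cons_snoc_eq_snoc_cons, Fin.snoc_last]

theorem lastEntry_le {r n : ℕ} {k : Fin r → ℕ} (hk : k ∈ increasingTuples r n) :
    lastEntry k ≤ n := by
  cases r with
  | zero => exact Nat.zero_le n
  | succ r => exact (mem_Icc.1 ((mem_increasingTuples.1 hk).1 (Fin.last r))).2

end LastEntry

section Delta

variable (a η : ℕ → ℝ)

/-- The summand `R_1^{k₁} R_{k₁+1}^{k₂} ⋯ R_{k_{r-1}+1}^{k_r}` of `Δ_r^n`, written uniformly in the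
factors by prepending `k₀ = 0` to the tuple. -/
noncomputable def chainProd {r : ℕ} (k : Fin r → ℕ) : ℝ :=
  ∏ i : Fin r, Rkl a η ((Fin.cons 0 k : Fin (r + 1) → ℕ) i.castSucc + 1) (k i)

theorem chainProd_snoc {r : ℕ} (k : Fin r → ℕ) (m : ℕ) :
    chainProd a η (Fin.snoc k m : Fin (r + 1) → ℕ) =
      chainProd a η k * Rkl a η (lastEntry k + 1) m := by
  simp only [chainProd, lastEntry, Fin.prod_univ_castSucc, Fin.cons_snoc_eq_snoc_cons,
    Fin.snoc_castSucc, Fin.snoc_last]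

theorem Delta_eq_sum_chainProd (r n : ℕ) :
    Delta a η r n = ∑ k ∈ increasingTuples r n, chainProd a η k := by
  refine sum_congr rfl fun k _ => prod_congr rfl fun i _ => ?_
  cases r with
  | zero => exact i.elim0
  | succ r => cases i using Fin.cases <;> rfl

theorem Delta_zero_left (n : ℕ) : Delta a η 0 n = 1 := by
  simp [Delta_eq_sum_chainProd, increasingTuples_zero, chainProd]

theorem Delta_eq_zero_of_lt {r n : ℕ} (h : n < r) : Delta a η r n = 0 := by
  rw [Delta_eq_sum_chainProd, increasingTuples_eq_empty h, sum_empty]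

theorem Delta_succ_succ_eq_add_sum (r n : ℕ) :
    Delta a η (r + 1) (n + 1) = Delta a η (r + 1) n +
      ∑ k ∈ increasingTuples r n, chainProd a η k * Rkl a η (lastEntry k + 1) (n + 1) := by
  simp only [Delta_eq_sum_chainProd, sum_increasingTuples_succ_succ, chainProd_snoc]

theorem Rkl_succ_self (n : ℕ) : Rkl a η (n + 1) n = 0 := by
  simp [Rkl]

-- Tuples that already end at `n` contribute nothing, because `R_{n+1}^n` is an empty sum.
theorem sum_chainProd_mul_Rkl_succ (r n : ℕ) :
    ∑ k ∈ increasingTuples r (n + 1), chainProd a η k * Rkl a η (lastEntry k + 1) (n + 1) =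
      ∑ k ∈ increasingTuples r n, chainProd a η k * Rkl a η (lastEntry k + 1) (n + 1) := by
  cases r with
  | zero => simp only [increasingTuples_zero]
  | succ r =>
    simp only [sum_increasingTuples_succ_succ, lastEntry_snoc, Rkl_succ_self, mul_zero,
      sum_const_zero, add_zero]

-- For `n = 0` the truncated subtraction gives `0 = 0`.
theorem Delta_succ_sub_Delta_pred (r n : ℕ) :
    Delta a η (r + 1) n - Delta a η (r + 1) (n - 1) =
      ∑ k ∈ increasingTuples r n, chainProd a η k * Rkl a η (lastEntry k + 1) n := by
  cases n with
  | zero => simp [Rkl]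
  | succ n =>
    rw [sum_chainProd_mul_Rkl_succ, Delta_succ_succ_eq_add_sum, Nat.add_sub_cancel,
      add_sub_cancel_left]

theorem rho_succ (n : ℕ) : rho a (n + 1) = rho a n * a (n + 1) :=
  prod_Icc_succ_top n.succ_pos a

variable {a}

theorem rho_ne_zero (ha : ∀ k, 1 ≤ k → a k ≠ 0) (n : ℕ) : rho a n ≠ 0 :=
  prod_ne_zero_iff.2 fun k hk => ha k (mem_Icc.1 hk).1

theorem Rkl_succ_right (ha : ∀ k, 1 ≤ k → a k ≠ 0) {k n : ℕ} (h : k ≤ n + 1) :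
    Rkl a η k (n + 1) = a (n + 1) * Rkl a η k n + η (n + 1) := by
  rw [Rkl, sum_Icc_succ_top h, div_self (rho_ne_zero ha _), mul_one, Rkl, mul_sum, rho_succ]
  exact congrArg (· + η (n + 1)) (sum_congr rfl fun s _ => by ring)

theorem Delta_succ_succ (ha : ∀ k, 1 ≤ k → a k ≠ 0) (r n : ℕ) :
    Delta a η (r + 1) (n + 1) = (1 + a (n + 1)) * Delta a η (r + 1) n
      - a (n + 1) * Delta a η (r + 1) (n - 1) + η (n + 1) * Delta a η r n := by
  have hlast : ∑ k ∈ increasingTuples r n,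
        chainProd a η k * Rkl a η (lastEntry k + 1) (n + 1) =
      a (n + 1) * (Delta a η (r + 1) n - Delta a η (r + 1) (n - 1))
        + η (n + 1) * Delta a η r n := by
    rw [Delta_succ_sub_Delta_pred, Delta_eq_sum_chainProd a η r, mul_sum, mul_sum,
      ← sum_add_distrib]
    refine sum_congr rfl fun k hk => ?_
    rw [Rkl_succ_right η ha (Nat.succ_le_succ (lastEntry_le hk))]
    ring
  rw [Delta_succ_succ_eq_add_sum, hlast]
  ring

end Delta

section ThreeTermRecurrence

/-- `u` solves the three-term recurrence `u (n + 2) = p (n + 2) u (n + 1) - q (n + 2) u n`. The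
values of `p` and `q` below `2` are irrelevant. -/
def IsThreeTermSolution {S : Type*} [Ring S] (p q u : ℕ → S) : Prop :=
  ∀ n, u (n + 2) = p (n + 2) * u (n + 1) - q (n + 2) * u n

namespace IsThreeTermSolution

variable {S T : Type*} [Ring S] [Ring T] {p q u v : ℕ → S}

theorem sub (hu : IsThreeTermSolution p q u) (hv : IsThreeTermSolution p q v) :
    IsThreeTermSolution p q (u - v) := fun n => by
  simp only [Pi.sub_apply, hu n, hv n, mul_sub]
  abel

theorem map (hu : IsThreeTermSolution p q u) (φ : S →+* T) :
    IsThreeTermSolution (φ ∘ p) (φ ∘ q) (φ ∘ u) := fun n => by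
  simp only [Function.comp_apply, hu n, map_sub, map_mul]

theorem eq_of_initial_values (hu : IsThreeTermSolution p q u) (hv : IsThreeTermSolution p q v)
    (h0 : u 0 = v 0) (h1 : u 1 = v 1) : u = v := by
  funext n
  induction n using Nat.twoStepInduction with
  | zero => exact h0
  | one => exact h1
  | more n ih ih' => rw [hu n, hv n, ih, ih']

end IsThreeTermSolution

end ThreeTermRecurrence

section GeneratingPolynomials

theorem coeff_sum_range_X_pow_mul_C {R : Type*} [Semiring R] {c : ℕ → R} {n : ℕ}
    (hc : ∀ r, n < r → c r = 0) (r : ℕ) :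
    (∑ i ∈ range (n + 1), X ^ i * C (c i)).coeff r = c r := by
  simp only [finsetSum_coeff, coeff_mul_C, coeff_X_pow, ite_mul, one_mul, zero_mul,
    sum_ite_eq, mem_range, ite_eq_left_iff]
  exact fun h => (hc r (by lia)).symm

variable (a η : ℕ → ℝ)

/-- The generating polynomial `D_n = ∑_r Δ_r^n X^r`, whose value at `X = -it` is `B_n - A_n`. -/
noncomputable def deltaPoly (n : ℕ) : ℝ[X] :=
  ∑ r ∈ range (n + 1), X ^ r * C (Delta a η r n)

/-- The polynomial `∑_k ρ_k θ^k D_{n-k}`, whose value at `X = -it` is `B_n`. -/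
noncomputable def shiftedDeltaPoly (n : ℕ) : ℝ[X] :=
  ∑ k ∈ range (n + 1), C (rho a k) * deltaPoly (shift a k) (shift η k) (n - k)

theorem coeff_deltaPoly (n r : ℕ) : (deltaPoly a η n).coeff r = Delta a η r n :=
  coeff_sum_range_X_pow_mul_C (fun _ => Delta_eq_zero_of_lt a η) r

theorem deltaPoly_zero : deltaPoly a η 0 = 1 := by
  simp [deltaPoly, Delta_zero_left]

theorem shiftedDeltaPoly_eq_sum (n : ℕ) :
    shiftedDeltaPoly a η n = ∑ r ∈ range (n + 1), X ^ r *
      C (∑ k ∈ range (n + 1), rho a k * Delta (shift a k) (shift η k) r (n - k)) := by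
  have hdeg (r : ℕ) (hr : n < r) :
      ∑ k ∈ range (n + 1), rho a k * Delta (shift a k) (shift η k) r (n - k) = 0 :=
    sum_eq_zero fun k _ => by rw [Delta_eq_zero_of_lt _ _ (by lia), mul_zero]
  ext r
  rw [coeff_sum_range_X_pow_mul_C hdeg]
  simp only [shiftedDeltaPoly, finsetSum_coeff, coeff_C_mul, coeff_deltaPoly]

variable {a}

-- The truncated `n - 1` makes the case `n = 0` read `D₁ = (1 + a₁ + η₁ X) D₀ - a₁ D₀`.
theorem deltaPoly_succ (ha : ∀ k, 1 ≤ k → a k ≠ 0) (n : ℕ) :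
    deltaPoly a η (n + 1) = (C (1 + a (n + 1)) + C (η (n + 1)) * X) * deltaPoly a η n
      - C (a (n + 1)) * deltaPoly a η (n - 1) := by
  ext r
  cases r with
  | zero => simp [add_mul, mul_assoc, coeff_deltaPoly, Delta_zero_left]
  | succ r =>
    simp only [add_mul, mul_assoc, coeff_sub, coeff_add, coeff_C_mul, coeff_X_mul,
      coeff_deltaPoly, Delta_succ_succ η ha]
    ring

theorem deltaPoly_one (ha : ∀ k, 1 ≤ k → a k ≠ 0) : deltaPoly a η 1 = 1 + C (η 1) * X := by
  rw [deltaPoly_succ η ha 0, deltaPoly_zero, C_add, C_1]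
  ring

theorem isThreeTermSolution_deltaPoly (ha : ∀ k, 1 ≤ k → a k ≠ 0) :
    IsThreeTermSolution (fun n => C (1 + a n) + C (η n) * X) (fun n => C (a n))
      (deltaPoly a η) :=
  fun n => deltaPoly_succ η ha (n + 1)

theorem deltaPoly_shift_succ (ha : ∀ k, 1 ≤ k → a k ≠ 0) {k n : ℕ} (hk : k ≤ n) :
    deltaPoly (shift a k) (shift η k) (n + 1 - k) =
      (C (1 + a (n + 1)) + C (η (n + 1)) * X) * deltaPoly (shift a k) (shift η k) (n - k)
        - C (a (n + 1)) * deltaPoly (shift a k) (shift η k) (n - 1 - k) := by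
  have hshift (f : ℕ → ℝ) : shift f k (n - k + 1) = f (n + 1) := congrArg f (by lia)
  have hne (j : ℕ) (hj : 1 ≤ j) : shift a k j ≠ 0 := ha (j + k) (Nat.le_add_right_of_le hj)
  rw [Nat.sub_add_comm hk, deltaPoly_succ _ hne, hshift, hshift, Nat.sub_right_comm]

theorem isThreeTermSolution_shiftedDeltaPoly (ha : ∀ k, 1 ≤ k → a k ≠ 0) :
    IsThreeTermSolution (fun n => C (1 + a n) + C (η n) * X) (fun n => C (a n))
      (shiftedDeltaPoly a η) := fun n => by
  have hbulk : ∑ k ∈ range (n + 2),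
        C (rho a k) * deltaPoly (shift a k) (shift η k) (n + 2 - k) =
      (C (1 + a (n + 2)) + C (η (n + 2)) * X) * shiftedDeltaPoly a η (n + 1)
        - C (a (n + 2)) * ∑ k ∈ range (n + 2),
            C (rho a k) * deltaPoly (shift a k) (shift η k) (n - k) := by
    rw [shiftedDeltaPoly, mul_sum, mul_sum, ← sum_sub_distrib]
    refine sum_congr rfl fun k hk => ?_
    rw [deltaPoly_shift_succ η ha (Nat.lt_succ_iff.1 (mem_range.1 hk)), Nat.add_sub_cancel]
    ring
  -- Since `n - (n + 1) = 0`, the last term of the subtracted sum is `ρₙ₊₁ D₀ = ρₙ₊₁`; multiplied by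
  -- `aₙ₊₂` it cancels the term `k = n + 2` of the left-hand side.
  have hextra : ∑ k ∈ range (n + 2),
        C (rho a k) * deltaPoly (shift a k) (shift η k) (n - k) =
      shiftedDeltaPoly a η n + C (rho a (n + 1)) := by
    rw [sum_range_succ, Nat.sub_eq_zero_of_le n.le_succ, deltaPoly_zero, mul_one,
      shiftedDeltaPoly]
  rw [shiftedDeltaPoly, sum_range_succ, hbulk, hextra, Nat.sub_self, deltaPoly_zero,
    rho_succ a (n + 1), C_mul]
  ring

theorem shiftedDeltaPoly_zero : shiftedDeltaPoly a η 0 = 1 := by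
  simp [shiftedDeltaPoly, deltaPoly_zero, rho]

theorem shiftedDeltaPoly_one (ha : ∀ k, 1 ≤ k → a k ≠ 0) :
    shiftedDeltaPoly a η 1 = C (1 + a 1) + C (η 1) * X := by
  have hone : deltaPoly (shift a 0) (shift η 0) 1 = 1 + C (η 1) * X := deltaPoly_one η ha
  simp only [shiftedDeltaPoly, sum_range_succ, sum_range_zero, Nat.sub_zero, Nat.sub_self, hone,
    deltaPoly_zero, rho, zero_add, Icc_self, prod_singleton, Icc_eq_empty_of_lt zero_lt_one,
    prod_empty, C_add, C_1]
  ring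

end GeneratingPolynomials

section Evaluation

variable {S : Type*} [Ring S] [Algebra ℝ S]

theorem aeval_deltaPoly (a η : ℕ → ℝ) (z : S) (n : ℕ) :
    aeval z (deltaPoly a η n) =
      ∑ r ∈ range (n + 1), z ^ r * algebraMap ℝ S (Delta a η r n) := by
  simp only [deltaPoly, map_sum, map_mul, map_pow, aeval_X, aeval_C]

theorem aeval_shiftedDeltaPoly (a η : ℕ → ℝ) (z : S) (n : ℕ) :
    aeval z (shiftedDeltaPoly a η n) =
      ∑ r ∈ range (n + 1), z ^ r * ∑ k ∈ range (n + 1),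
        algebraMap ℝ S (rho a k) * algebraMap ℝ S (Delta (shift a k) (shift η k) r (n - k)) := by
  simp only [shiftedDeltaPoly_eq_sum, map_sum, map_mul, map_pow, aeval_X, aeval_C]

theorem isThreeTermSolution_of_int_recurrence {a η : ℕ → ℝ} {w : S} {u : ℤ → S}
    (hu : ∀ n : ℕ, 2 ≤ n → u n = (algebraMap ℝ S (1 + a n) - w * algebraMap ℝ S (η n)) *
      u (n - 1) - algebraMap ℝ S (a n) * u (n - 2)) :
    IsThreeTermSolution (aeval (-w) ∘ fun n => C (1 + a n) + C (η n) * X)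
      (aeval (-w) ∘ fun n => C (a n)) (fun n : ℕ => u n) := fun n => by
  have hpred : ((n + 2 : ℕ) : ℤ) - 1 = (n + 1 : ℕ) := by lia
  have hpred' : ((n + 2 : ℕ) : ℤ) - 2 = n := by lia
  simpa only [hpred, hpred', Function.comp_apply, map_add (aeval (-w)), map_mul, aeval_C, aeval_X,
    mul_neg, Algebra.commutes (η (n + 2)) w, ← sub_eq_add_neg] using hu (n + 2) (by lia)

end Evaluation

theorem stmt_13_general {S : Type*} [Ring S] [Algebra ℝ S]
    (a η : ℕ → ℝ) (ha : ∀ k : ℕ, 1 ≤ k → a k ≠ 0) (w : S)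
    (B : ℤ → S) (hBm : B (-1) = 0) (hB0 : B 0 = 1)
    (hB : ∀ n : ℕ, 1 ≤ n → B n = (algebraMap ℝ S (1 + a n) - w * algebraMap ℝ S (η n)) *
      B (n - 1) - algebraMap ℝ S (a n) * B (n - 2))
    (A : ℤ → S) (hA0 : A 0 = 0) (hA1 : A 1 = algebraMap ℝ S (a 1))
    (hA : ∀ n : ℕ, 2 ≤ n → A n = (algebraMap ℝ S (1 + a n) - w * algebraMap ℝ S (η n)) *
      A (n - 1) - algebraMap ℝ S (a n) * A (n - 2)) (n : ℕ) :
    B n - A n = ∑ r ∈ range (n + 1), (-w) ^ r * algebraMap ℝ S (Delta a η r n) ∧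
    B n = ∑ r ∈ range (n + 1), (-w) ^ r * ∑ k ∈ range (n + 1),
      algebraMap ℝ S (rho a k) * algebraMap ℝ S (Delta (shift a k) (shift η k) r (n - k)) := by
  have hB1 : B 1 = algebraMap ℝ S (1 + a 1) - w * algebraMap ℝ S (η 1) := by
    simpa [hB0, hBm] using hB 1 le_rfl
  have hBsol := isThreeTermSolution_of_int_recurrence fun n hn => hB n (one_le_two.trans hn)
  have hBA : (fun n : ℕ => B n) - (fun n : ℕ => A n) = aeval (-w) ∘ deltaPoly a η := by
    refine (hBsol.sub (isThreeTermSolution_of_int_recurrence hA)).eq_of_initial_values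
      ((isThreeTermSolution_deltaPoly η ha).map (aeval (-w)).toRingHom) ?_ ?_
    · simp [hB0, hA0, deltaPoly_zero]
    · change B 1 - A 1 = aeval (-w) (deltaPoly a η 1)
      rw [hB1, hA1, deltaPoly_one η ha, map_add, map_add, map_mul, aeval_C, aeval_X, mul_neg,
        Algebra.commutes, map_one, map_one]
      abel
  have hBP : (fun n : ℕ => B n) = aeval (-w) ∘ shiftedDeltaPoly a η := by
    refine hBsol.eq_of_initial_values
      ((isThreeTermSolution_shiftedDeltaPoly η ha).map (aeval (-w)).toRingHom) ?_ ?_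
    · simp [hB0, shiftedDeltaPoly_zero]
    · simp [hB1, shiftedDeltaPoly_one η ha, Algebra.commutes (η 1) w, sub_eq_add_neg]
  exact ⟨(congrFun hBA n).trans (aeval_deltaPoly a η (-w) n),
    (congrFun hBP n).trans (aeval_shiftedDeltaPoly a η (-w) n)⟩

/-- Expansion of `B n - A n` and of `B n` in powers of `-it` with coefficients `Δ_r^n`. -/
theorem stmt_13
    (a η : ℕ → ℝ) (ha : ∀ k : ℕ, 1 ≤ k → 0 < a k) (t : ℝ)
    (B : ℤ → ℂ) (hBm : B (-1) = 0) (hB0 : B 0 = 1)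
    (hB : ∀ n : ℕ, 1 ≤ n →
      B (n : ℤ) = (((1 + a n : ℝ) : ℂ) - Complex.I * (t : ℂ) * ((η n : ℝ) : ℂ)) * B ((n : ℤ) - 1)
        - ((a n : ℝ) : ℂ) * B ((n : ℤ) - 2))
    (A : ℤ → ℂ) (hA0 : A 0 = 0) (hA1 : A 1 = ((a 1 : ℝ) : ℂ))
    (hA : ∀ n : ℕ, 2 ≤ n →
      A (n : ℤ) = (((1 + a n : ℝ) : ℂ) - Complex.I * (t : ℂ) * ((η n : ℝ) : ℂ)) * A ((n : ℤ) - 1)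
        - ((a n : ℝ) : ℂ) * A ((n : ℤ) - 2)) :
    ∀ n : ℕ,
      B (n : ℤ) - A (n : ℤ) =
        ∑ r ∈ Finset.range (n + 1), (-(Complex.I * (t : ℂ))) ^ r * ((Delta a η r n : ℝ) : ℂ) ∧
      B (n : ℤ) =
        ∑ r ∈ Finset.range (n + 1), (-(Complex.I * (t : ℂ))) ^ r *
          ∑ k ∈ Finset.range (n + 1),
            ((rho a k : ℝ) : ℂ) * ((Delta (shift a k) (shift η k) r (n - k) : ℝ) : ℂ) := by
  exact stmt_13_general a η (fun k hk => (ha k hk).ne') (Complex.I * t) B hBm hB0 hB A hA0 hA1 hA
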